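/- Let 𝒯 be an admissible T-mesh. If 𝒯 is strongly dual-compatible (SDC), then 𝒯 is weakly dual-compatible (WDC); that is, if any two distinct anchors strongly partially overlap, then any two distinct anchors weakly partially overlap. -/

import Mathlib

open Set

namespace TSpline

/-- A box in `ℝ^d`, given componentwise. -/
abbrev Box (d : ℕ) := Fin d → Set ℝ

/-- The subset of `ℝ^d` determined by a box. -/
def toSet {d : ℕ} (E : Box d) : Set (Fin d → ℝ) := Set.pi Set.univ E

/-- The closed index domain `cl Ω = ∏ₖ [0, Nₖ]`. -/
def domain {d : ℕ} (N : Fin d → ℕ) : Set (Fin d → ℝ) :=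
  Set.pi Set.univ (fun k => Set.Icc (0 : ℝ) (N k))

/-- The boundary `∂Ω` of the index domain. -/
def bdryDomain {d : ℕ} (N : Fin d → ℕ) : Set (Fin d → ℝ) := frontier (domain N)

/-- A component which is an integer singleton `{n}`, `0 ≤ n ≤ Nₖ`. -/
def IsSingletonComp (Nk : ℕ) (S : Set ℝ) : Prop :=
  ∃ n : ℕ, n ≤ Nk ∧ S = {(n : ℝ)}

/-- A component which is an open interval with integer endpoints in `[0, Nₖ]`. -/
def IsIntervalComp (Nk : ℕ) (S : Set ℝ) : Prop :=
  ∃ a b : ℕ, a < b ∧ b ≤ Nk ∧ S = Set.Ioo (a : ℝ) (b : ℝ)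

/-- A mesh entity: every component is an integer singleton or an open integer interval. -/
def IsMeshEntity {d : ℕ} (N : Fin d → ℕ) (E : Box d) : Prop :=
  ∀ k, IsSingletonComp (N k) (E k) ∨ IsIntervalComp (N k) (E k)

/-- The directions in which an entity has a singleton component. -/
def singDirs {d : ℕ} (E : Box d) : Set (Fin d) := {i | ∃ r : ℝ, E i = {r}}

/-- Split all entities of `M` contained in the region `D` whose `j`-th component is `Q j`
into the three children obtained by bisecting the `j`-th component at `m`. -/
def midSplit {d : ℕ} (M : Set (Box d)) (Q : Box d) (j : Fin d) (m : ℝ) (D : Box d) :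
    Set (Box d) :=
  (M \ {E | E ∈ M ∧ (∀ k, E k ⊆ D k) ∧ E j = Q j}) ∪
  ⋃ E ∈ {E | E ∈ M ∧ (∀ k, E k ⊆ D k) ∧ E j = Q j},
    ({Function.update E j (Set.Ioo (sInf (Q j)) m),
      Function.update E j {m},
      Function.update E j (Set.Ioo m (sSup (Q j)))} : Set (Box d))

/-- One symmetric bisection of a `d`-dimensional cell with integer midpoint. -/
def BisectStep {d : ℕ} (N : Fin d → ℕ) (M M' : Set (Box d)) : Prop :=
  ∃ Q ∈ M, ∃ j : Fin d, ∃ a b mid : ℕ,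
    (∀ k, IsIntervalComp (N k) (Q k)) ∧
    Q j = Set.Ioo (a : ℝ) (b : ℝ) ∧ a + b = 2 * mid ∧
    M' = midSplit M Q j (mid : ℝ) (fun k => closure (Q k))

/-- A tensor-product mesh with integer breakpoints. -/
def IsTensorMesh {d : ℕ} (N : Fin d → ℕ) (M : Set (Box d)) : Prop :=
  ∃ G : Fin d → Finset ℕ,
    (∀ k, 0 ∈ G k ∧ N k ∈ G k ∧ ∀ n ∈ G k, n ≤ N k) ∧
    M = {E | ∀ k, (∃ n ∈ G k, E k = {(n : ℝ)}) ∨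
          (∃ a ∈ G k, ∃ b ∈ G k, a < b ∧ (∀ c ∈ G k, c ≤ a ∨ b ≤ c) ∧
            E k = Set.Ioo (a : ℝ) (b : ℝ))}

/-- A T-mesh of the index domain: a finite disjoint partition of `cl Ω` into mesh
entities, obtained from a tensor-product mesh by repeated symmetric bisections. -/
structure TMesh (d : ℕ) (N : Fin d → ℕ) where
  entities : Set (Box d)
  finite : entities.Finite
  mem_entity : ∀ E ∈ entities, IsMeshEntity N E
  union_eq : (⋃ E ∈ entities, toSet E) = domain N
  pairwise_disjoint : ∀ E ∈ entities, ∀ F ∈ entities, E ≠ F → toSet E ∩ toSet F = ∅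
  constructed : ∃ M₀ : Set (Box d), IsTensorMesh N M₀ ∧
    Relation.ReflTransGen (BisectStep N) M₀ entities

variable {d : ℕ} {N : Fin d → ℕ}

/-- `H^k`: the entities with exactly `d - k` singleton components. -/
def Hdim (T : TMesh d N) (k : ℕ) : Set (Box d) :=
  {E ∈ T.entities | (singDirs E).ncard = d - k}

/-- The `j`-orthogonal skeleton `Sk_j`. -/
def skel (T : TMesh d N) (j : Fin d) : Set (Fin d → ℝ) :=
  ⋃ F ∈ {F ∈ Hdim T (d - 1) | ∃ r : ℝ, F j = {r}}, closure (toSet F)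

/-- The valence of a `(d-2)`-dimensional entity: the number of hyperfaces in whose
boundary it lies. -/
noncomputable def valence (T : TMesh d N) (J : Box d) : ℕ :=
  {F ∈ Hdim T (d - 1) | toSet J ⊆ frontier (toSet F)}.ncard

/-- A T-junction (hanging interface). -/
def IsTJunction (T : TMesh d N) (J : Box d) : Prop :=
  J ∈ Hdim T (d - 2) ∧ ¬ toSet J ⊆ bdryDomain N ∧ valence T J < 4

/-- `TJData T J Q i j`: `Q` is an associated cell of the T-junction `J`, with orthogonal
direction `i` and pointing direction `j`. -/
def TJData (T : TMesh d N) (J Q : Box d) (i j : Fin d) : Prop :=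
  Q ∈ Hdim T d ∧ toSet J ⊆ frontier (toSet Q) ∧
  closure (toSet J) ∩ Set.pi Set.univ (fun k => frontier (Q k)) = ∅ ∧
  i ≠ j ∧ (∃ r : ℝ, J i = {r}) ∧ (∃ r : ℝ, J j = {r}) ∧
  J i ⊆ Q i ∧ J i ≠ Q i ∧ J j ⊆ frontier (Q j)

/-- `⌊(p_k + 1)/2⌋`. -/
def halfdeg (p : Fin d → ℕ) (k : Fin d) : ℕ := (p k + 1) / 2

/-- The active region `AR_p`. -/
def activeRegion (N p : Fin d → ℕ) : Set (Fin d → ℝ) :=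
  Set.pi Set.univ (fun k => Set.Icc (halfdeg p k : ℝ) ((N k : ℝ) - (halfdeg p k : ℝ)))

/-- The slice `S_k(n)`. -/
def slice (N : Fin d → ℕ) (k : Fin d) (n : ℕ) : Set (Fin d → ℝ) :=
  {x ∈ domain N | x k = (n : ℝ)}

/-- The `k`-th frame region `FR^(k)`. -/
def frameRegion (N p : Fin d → ℕ) (k : Fin d) : Set (Fin d → ℝ) :=
  {x ∈ domain N | x k ∈ Set.Icc (0 : ℝ) (halfdeg p k : ℝ) ∪
      Set.Icc ((N k : ℝ) - (halfdeg p k : ℝ)) (N k : ℝ)}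

/-- Admissibility of a T-mesh. -/
def Admissible (p : Fin d → ℕ) (T : TMesh d N) : Prop :=
  (∀ k : Fin d, ∀ J Q : Box d, ∀ i j : Fin d, IsTJunction T J → TJData T J Q i j →
      (i = k ∨ j = k) → ¬ toSet J ⊆ frameRegion N p k) ∧
  (∀ k : Fin d, ∀ n : ℕ, (n ≤ halfdeg p k ∨ (N k - halfdeg p k ≤ n ∧ n ≤ N k)) →
      slice N k n ⊆ skel T k)

/-- Anchors of degree `p`. -/
def IsAnchor (p : Fin d → ℕ) (T : TMesh d N) (A : Box d) : Prop :=
  A ∈ T.entities ∧ toSet A ⊆ activeRegion N p ∧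
  ∀ j : Fin d, (∃ r : ℝ, A j = {r}) ↔ Odd (p j)

/-- `P_{j,n}(E)`: replace the `j`-th component of `E` by `{n}`. -/
def proj {d : ℕ} (E : Box d) (j : Fin d) (n : ℕ) : Box d :=
  Function.update E j {(n : ℝ)}

/-- The global knot vector `gv_j(E)` (as a set of integer indices). -/
def gv (T : TMesh d N) (j : Fin d) (E : Box d) : Set ℕ :=
  {n | n ≤ N j ∧ toSet (proj E j n) ⊆ skel T j}

/-- `V` is a block of consecutive entries of `G`. -/
def IsBlockOf (V G : Set ℕ) : Prop :=
  V ⊆ G ∧ V.Finite ∧ ∀ g ∈ G, ∀ a ∈ V, ∀ b ∈ V, a ≤ g → g ≤ b → g ∈ V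

/-- Two knot vectors overlap (`⋈`): both occur as blocks of consecutive entries of a
common knot vector. -/
def Overlaps (V₁ V₂ : Set ℕ) : Prop :=
  ∃ W : Set ℕ, W.Finite ∧ IsBlockOf V₁ W ∧ IsBlockOf V₂ W

/-- The convex hull in `ℝ` of a set of integer indices. -/
def convOf (V : Set ℕ) : Set ℝ := convexHull ℝ ((fun n : ℕ => (n : ℝ)) '' V)

/-- The local knot vector of an anchor `A` in direction `j`: the block of `p_j + 2`
consecutive entries of `gv_j(A)` whose entry of rank `⌊(p_j+1)/2⌋` is `inf A_j`. -/
def IsAnchorKV (T : TMesh d N) (p : Fin d → ℕ) (A : Box d) (j : Fin d) (V : Set ℕ) : Prop :=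
  IsBlockOf V (gv T j A) ∧ V.ncard = p j + 2 ∧
  ∃ a : ℕ, (a : ℝ) = sInf (A j) ∧ a ∈ V ∧ {v ∈ V | v < a}.ncard = halfdeg p j

open Classical in
noncomputable def anchorKV (T : TMesh d N) (p : Fin d → ℕ) (A : Box d) (j : Fin d) :
    Set ℕ :=
  if h : ∃ V, IsAnchorKV T p A j V then h.choose else ∅

/-- The index support of an anchor. -/
noncomputable def suppA (T : TMesh d N) (p : Fin d → ℕ) (A : Box d) : Set (Fin d → ℝ) :=
  Set.pi Set.univ (fun k => convOf (anchorKV T p A k))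

/-- The local knot vector of a T-junction `J` (with associated cell `Q`, orthogonal
direction `i`, pointing direction `j`) in direction `k`. -/
def IsTJKV (T : TMesh d N) (p : Fin d → ℕ) (J Q : Box d) (i j k : Fin d) (V : Set ℕ) :
    Prop :=
  if k = i then ∃ t : ℕ, J i = {(t : ℝ)} ∧ V = {t}
  else if k = j then
    IsBlockOf V (gv T j J) ∧ V.ncard = p j + 1 ∧
    ((Even (p j) ∧ ∃ t : ℕ, J j = {(t : ℝ)} ∧ t ∈ V ∧ {v ∈ V | v < t}.ncard = p j / 2) ∨
     (Odd (p j) ∧ ∃ a b : ℕ, (a : ℝ) = sInf (Q j) ∧ (b : ℝ) = sSup (Q j) ∧ a ∈ V ∧ b ∈ V ∧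
        {v ∈ V | v < a}.ncard = p j / 2 ∧ {v ∈ V | v < b}.ncard = p j / 2 + 1))
  else
    IsBlockOf V (gv T k J) ∧ V.ncard = p k + 2 + p k % 2 ∧
    ∃ a b : ℕ, a ∈ V ∧ b ∈ V ∧ J k = Set.Ioo (a : ℝ) (b : ℝ) ∧
      {v ∈ V | v < a}.ncard = (p k + 1) / 2 ∧ {v ∈ V | v < b}.ncard = (p k + 1) / 2 + 1

/-- Local knot vector of a T-junction, quantifying over the (unique) associated data. -/
def IsTJKVFull (T : TMesh d N) (p : Fin d → ℕ) (J : Box d) (k : Fin d) (V : Set ℕ) :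
    Prop :=
  ∃ Q : Box d, ∃ i j : Fin d, TJData T J Q i j ∧ IsTJKV T p J Q i j k V

open Classical in
noncomputable def tjKV (T : TMesh d N) (p : Fin d → ℕ) (J : Box d) (k : Fin d) : Set ℕ :=
  if h : ∃ V, IsTJKVFull T p J k V then h.choose else ∅

/-- The geometric T-junction extension `GTJ(J)`. -/
noncomputable def GTJ (T : TMesh d N) (p : Fin d → ℕ) (J : Box d) : Set (Fin d → ℝ) :=
  Set.pi Set.univ (fun k => convOf (tjKV T p J k))

/-- `J` is a T-junction with orthogonal direction `i` and pointing direction `j`. -/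
def HasDirs (T : TMesh d N) (J : Box d) (i j : Fin d) : Prop :=
  IsTJunction T J ∧ ∃ Q : Box d, TJData T J Q i j

/-- Strong geometric analysis-suitability. -/
def SGAS (T : TMesh d N) (p : Fin d → ℕ) : Prop :=
  ∀ J₁ J₂ : Box d, ∀ i₁ j₁ i₂ j₂ : Fin d,
    HasDirs T J₁ i₁ j₁ → HasDirs T J₂ i₂ j₂ → i₁ ≠ i₂ →
    GTJ T p J₁ ∩ GTJ T p J₂ = ∅

/-- Weak geometric analysis-suitability. -/
def WGAS (T : TMesh d N) (p : Fin d → ℕ) : Prop :=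
  ∀ J₁ J₂ : Box d, ∀ i₁ j₁ i₂ j₂ : Fin d,
    HasDirs T J₁ i₁ j₁ → HasDirs T J₂ i₂ j₂ → i₁ ≠ i₂ → j₁ ≠ j₂ →
    GTJ T p J₁ ∩ GTJ T p J₂ = ∅

/-- The abstract T-junction extension `ATJ_j(n)`. -/
noncomputable def ATJ (T : TMesh d N) (p : Fin d → ℕ) (j : Fin d) (n : ℕ) :
    Set (Fin d → ℝ) :=
  slice N j n ∩
  (⋃ A ∈ {A : Box d | IsAnchor p T A ∧ n ∈ gv T j A}, suppA T p A) ∩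
  (⋃ A ∈ {A : Box d | IsAnchor p T A ∧ n ∉ gv T j A}, suppA T p A)

/-- `ATJ_j = ⋃ₙ ATJ_j(n)`. -/
noncomputable def ATJfull (T : TMesh d N) (p : Fin d → ℕ) (j : Fin d) :
    Set (Fin d → ℝ) :=
  ⋃ n ∈ Set.Iic (N j), ATJ T p j n

/-- Abstract analysis-suitability. -/
def AAS (T : TMesh d N) (p : Fin d → ℕ) : Prop :=
  ∀ i j : Fin d, i ≠ j → ∀ n m : ℕ, n ≤ N i → m ≤ N j →
    ATJ T p i n ∩ ATJ T p j m = ∅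

/-- Two anchors weakly partially overlap. -/
def WeakPartOverlap (T : TMesh d N) (p : Fin d → ℕ) (A₁ A₂ : Box d) : Prop :=
  ∃ ℓ : Fin d, anchorKV T p A₁ ℓ ≠ anchorKV T p A₂ ℓ ∧
    Overlaps (anchorKV T p A₁ ℓ) (anchorKV T p A₂ ℓ)

/-- Two anchors strongly partially overlap. -/
def StrongPartOverlap (T : TMesh d N) (p : Fin d → ℕ) (A₁ A₂ : Box d) : Prop :=
  suppA T p A₁ ∩ suppA T p A₂ = ∅ ∨
  d - 1 ≤ {k : Fin d | Overlaps (anchorKV T p A₁ k) (anchorKV T p A₂ k)}.ncard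

/-- Weak dual-compatibility. -/
def WDC (T : TMesh d N) (p : Fin d → ℕ) : Prop :=
  ∀ A₁ A₂ : Box d, IsAnchor p T A₁ → IsAnchor p T A₂ → A₁ ≠ A₂ →
    WeakPartOverlap T p A₁ A₂

/-- Strong dual-compatibility. -/
def SDC (T : TMesh d N) (p : Fin d → ℕ) : Prop :=
  ∀ A₁ A₂ : Box d, IsAnchor p T A₁ → IsAnchor p T A₂ → A₁ ≠ A₂ →
    StrongPartOverlap T p A₁ A₂

/-- `Q'` is a neighboring cell of `Q` in direction `ℓ`. -/
def NeighborInDir (T : TMesh d N) (Q Q' : Box d) (ℓ : Fin d) : Prop :=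
  Q' ∈ Hdim T d ∧ Q' ≠ Q ∧
  (sSup (Q ℓ) = sInf (Q' ℓ) ∨ sSup (Q' ℓ) = sInf (Q ℓ)) ∧
  ∀ k : Fin d, k ≠ ℓ → (Q k ∩ Q' k).Nonempty

/-- Assumption A: every cell has neighbor cells in the active region in at least three
pairwise distinct directions. -/
def AssumptionA (T : TMesh d N) (p : Fin d → ℕ) : Prop :=
  ∀ Q ∈ Hdim T d, ∃ l₁ l₂ l₃ : Fin d, l₁ ≠ l₂ ∧ l₁ ≠ l₃ ∧ l₂ ≠ l₃ ∧
    ∀ l ∈ ({l₁, l₂, l₃} : Set (Fin d)),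
      ∃ Q' : Box d, NeighborInDir T Q Q' l ∧ toSet Q' ⊆ activeRegion N p

/-- The extended region `D` of Algorithm `subdiv`. -/
def extendD (N p : Fin d → ℕ) (Q : Box d) (j : Fin d) : Box d := fun ℓ =>
  closure (Q ℓ) ∪
  {x : ℝ | ℓ ≠ j ∧ sInf (Q ℓ) = (halfdeg p ℓ : ℝ) ∧
      x ∈ Set.Icc (0 : ℝ) (halfdeg p ℓ : ℝ)} ∪
  {x : ℝ | ℓ ≠ j ∧ sSup (Q ℓ) = (N ℓ : ℝ) - (halfdeg p ℓ : ℝ) ∧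
      x ∈ Set.Icc ((N ℓ : ℝ) - (halfdeg p ℓ : ℝ)) (N ℓ : ℝ)}

/-- The entity set produced by Algorithm `subdiv(𝒯, Q, j)`. -/
def subdivEntities (N p : Fin d → ℕ) (M : Set (Box d)) (Q : Box d) (j : Fin d) :
    Set (Box d) :=
  midSplit M Q j ((sInf (Q j) + sSup (Q j)) / 2) (extendD N p Q j)

open Classical in
/-- The componentwise minimal bounding box `M(E,F)`. -/
noncomputable def MBox {d : ℕ} (E F : Box d) : Box d := fun ℓ =>
  if (E ℓ ∩ F ℓ).Nonempty then E ℓ ∩ F ℓ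
  else if sSup (E ℓ) ≤ sInf (F ℓ) then Set.Icc (sSup (E ℓ)) (sInf (F ℓ))
  else Set.Icc (sSup (F ℓ)) (sInf (E ℓ))

/-- `V` is the local knot vector of `E` (an anchor or a T-junction) in direction `j`. -/
def IsLocalKVOf (T : TMesh d N) (p : Fin d → ℕ) (E : Box d) (j : Fin d) (V : Set ℕ) :
    Prop :=
  (IsAnchor p T E ∧ IsAnchorKV T p E j V) ∨
  (IsTJunction T E ∧ IsTJKVFull T p E j V)

end TSpline

/-!
Among the end points and interior points of a component of an entity, exactly the end points are
knots. Bisecting a cell inserts the hyperface through its midpoint, which makes the new end points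
knots. Moreover bisections keep components dyadic, and of two distinct dyadic intervals that meet,
one lies in a half of the other; so an entity meeting the closure of another one is contained in
it, and no hyperface runs through an interior point. Hence the local knot vector `v_k(A)` of an
anchor determines `A_k`: its entry of rank `⌊(p_k + 1) / 2⌋` is `inf A_k`, and the next one is
`sup A_k` if `A_k` is an interval.

Let `A ≠ B` be anchors. If their supports are disjoint, then in some direction so are the convex
hulls of their local knot vectors, which therefore differ and are blocks of their union. Otherwise
the local knot vectors overlap in all directions but one, say `j`. If they agreed in all those
directions, then `A` and `B` would too, hence have the same global knot vector in direction `j`, so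
that the local ones overlap there as well; were those equal, `A` and `B` would coincide.
-/

namespace TSpline

/-! ### Gaps and dyadic intervals -/

section Gap

variable {α : Type*} [LinearOrder α] {G : Set α} {m n : α}

/-- `a < b` are neighbouring elements of the set of breakpoints `G`. -/
structure IsGap (G : Set α) (a b : α) : Prop where
  left_mem : a ∈ G
  right_mem : b ∈ G
  lt : a < b
  le_or_le : ∀ c ∈ G, c ≤ a ∨ b ≤ c

lemma exists_isGap_right (hG : G.Finite) (hn : n ∈ G) (hm : m ∈ G) (h : n < m) :
    ∃ b, IsGap G n b := by
  obtain ⟨b, ⟨hb, hnb⟩, hmin⟩ := (hG.subset (sep_subset G (n < ·))).exists_minimal ⟨m, hm, h⟩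
  exact ⟨b, hn, hb, hnb, fun c hc => (le_or_gt c n).imp_right fun hnc =>
    (le_total b c).elim id (hmin ⟨hc, hnc⟩)⟩

lemma exists_isGap_left (hG : G.Finite) (hn : n ∈ G) (hm : m ∈ G) (h : m < n) :
    ∃ a, IsGap G a n := by
  obtain ⟨a, ⟨ha, han⟩, hmax⟩ := (hG.subset (sep_subset G (· < n))).exists_maximal ⟨m, hm, h⟩
  exact ⟨a, ha, hn, han, fun c hc => (lt_or_ge c n).imp_left fun hcn =>
    (le_total c a).elim id (hmax ⟨hc, hcn⟩)⟩

lemma exists_isGap_mem_Icc (hG : G.Finite) (hG' : G.Nontrivial) (hn : n ∈ G) :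
    ∃ a b, IsGap G a b ∧ n ∈ Icc a b := by
  obtain ⟨m, hm, hmn⟩ := hG'.exists_ne n
  rcases hmn.lt_or_gt with h | h
  · obtain ⟨a, ha⟩ := exists_isGap_left hG hn hm h
    exact ⟨a, n, ha, ha.lt.le, le_rfl⟩
  · obtain ⟨b, hb⟩ := exists_isGap_right hG hn hm h
    exact ⟨n, b, hb, le_rfl, hb.lt.le⟩

end Gap

section Dyadic

variable {K : Type*} [Field K] [LinearOrder K] {G : Set K} {n n' k : ℕ} {a b c d : K}

/-- `(c, d)` is one of the two halves of `(a, b)`. -/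
def IsHalf (a b c d : K) : Prop :=
  (c = a ∧ d = (a + b) / 2) ∨ (c = (a + b) / 2 ∧ d = b)

/-- `(a, b)` arises by `n` successive halvings from a gap of `G`. -/
def IsDyadic (G : Set K) : ℕ → K → K → Prop
  | 0, a, b => IsGap G a b
  | n + 1, c, d => ∃ a b, IsDyadic G n a b ∧ IsHalf a b c d

lemma IsHalf.eq_or_disjoint {c' d' : K} (h : IsHalf a b c d) (h' : IsHalf a b c' d') :
    (c = c' ∧ d = d') ∨ d ≤ c' ∨ d' ≤ c := by
  rcases h with ⟨rfl, rfl⟩ | ⟨rfl, rfl⟩ <;> rcases h' with ⟨rfl, rfl⟩ | ⟨rfl, rfl⟩ <;> simp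

variable [IsStrictOrderedRing K]

lemma IsHalf.bounds (h : IsHalf a b c d) (hab : a < b) : a ≤ c ∧ c < d ∧ d ≤ b := by
  rcases h with ⟨rfl, rfl⟩ | ⟨rfl, rfl⟩ <;> refine ⟨?_, ?_, ?_⟩ <;> linarith

lemma IsDyadic.lt (h : IsDyadic G n a b) : a < b := by
  induction n generalizing a b with
  | zero => exact IsGap.lt h
  | succ n ih =>
    obtain ⟨a', b', hab, hhalf⟩ := h
    exact (hhalf.bounds (ih hab)).2.1

lemma IsDyadic.eq_or_disjoint (h : IsDyadic G n a b) (h' : IsDyadic G n c d) :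
    (a = c ∧ b = d) ∨ b ≤ c ∨ d ≤ a := by
  induction n generalizing a b c d with
  | zero =>
    have hc := IsGap.le_or_le h c (IsGap.left_mem h')
    have ha := IsGap.le_or_le h' a (IsGap.left_mem h)
    have hb := IsGap.le_or_le h' b (IsGap.right_mem h)
    have hd := IsGap.le_or_le h d (IsGap.right_mem h')
    grind [h.lt, h'.lt]
  | succ n ih =>
    obtain ⟨a', b', hab, hhalf⟩ := h
    obtain ⟨c', d', hcd, hhalf'⟩ := h'
    obtain ⟨ha, -, hb⟩ := hhalf.bounds hab.lt
    obtain ⟨hc, -, hd⟩ := hhalf'.bounds hcd.lt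
    rcases ih hab hcd with ⟨rfl, rfl⟩ | hle | hle
    · exact hhalf.eq_or_disjoint hhalf'
    · exact .inr (.inl (hb.trans (hle.trans hc)))
    · exact .inr (.inr (hd.trans (hle.trans ha)))

lemma IsDyadic.exists_ancestor (h : IsDyadic G (n + k) c d) :
    ∃ a b, IsDyadic G n a b ∧ a ≤ c ∧ d ≤ b := by
  induction k generalizing c d with
  | zero => exact ⟨c, d, h, le_rfl, le_rfl⟩
  | succ k ih =>
    obtain ⟨c', d', hcd, hhalf⟩ := h
    obtain ⟨hc, -, hd⟩ := hhalf.bounds hcd.lt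
    obtain ⟨a, b, hab, hac, hdb⟩ := ih hcd
    exact ⟨a, b, hab, hac.trans hc, hd.trans hdb⟩

lemma IsDyadic.le_mid_or_mid_le (h : IsDyadic G n a b) (h' : IsDyadic G n' c d)
    (hac : a ≤ c) (hdb : d ≤ b) (hne : ¬(a = c ∧ b = d)) :
    d ≤ (a + b) / 2 ∨ (a + b) / 2 ≤ c := by
  have hcd := h'.lt
  rcases lt_or_ge n n' with hn | hn
  · obtain ⟨k, rfl⟩ := Nat.exists_eq_add_of_le (Nat.succ_le_of_lt hn)
    obtain ⟨c₁, d₁, ⟨a₁, b₁, hab₁, hhalf⟩, hc, hd⟩ := h'.exists_ancestor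
    obtain ⟨ha, -, hb⟩ := hhalf.bounds hab₁.lt
    obtain ⟨rfl, rfl⟩ : a = a₁ ∧ b = b₁ :=
      (h.eq_or_disjoint hab₁).resolve_right (by rintro (hle | hle) <;> linarith)
    rcases hhalf with ⟨-, rfl⟩ | ⟨rfl, -⟩
    · exact .inl hd
    · exact .inr hc
  · obtain ⟨k, rfl⟩ := Nat.exists_eq_add_of_le hn
    obtain ⟨a₁, b₁, hab₁, ha, hb⟩ := h.exists_ancestor
    obtain ⟨rfl, rfl⟩ : a₁ = c ∧ b₁ = d :=
      (hab₁.eq_or_disjoint h').resolve_right (by rintro (hle | hle) <;> linarith)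
    exact absurd ⟨ha.antisymm' hac, hb.antisymm hdb⟩ hne

end Dyadic

/-! ### Components of mesh entities -/

section Component

variable {S S' : Set ℝ} {a b m : ℝ}

lemma not_exists_Ioo_eq_singleton (h : a < b) : ¬∃ r : ℝ, Ioo a b = {r} := by
  rintro ⟨r, hr⟩
  exact Ioo_infinite h (hr ▸ finite_singleton r)

lemma Ioo_eq_Ioo_iff_of_lt {c d : ℝ} (h : a < b) (h' : c < d) :
    Ioo a b = Ioo c d ↔ a = c ∧ b = d := by
  rw [Subset.antisymm_iff, Ioo_subset_Ioo_iff h, Ioo_subset_Ioo_iff h']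
  grind

/-- A component of an entity of the tensor-product mesh with breakpoints `G`. -/
def IsTensorComp (G S : Set ℝ) : Prop :=
  (∃ r ∈ G, S = {r}) ∨ ∃ a b, IsGap G a b ∧ S = Ioo a b

/-- A component arising from bisections of a mesh with breakpoints `G`: a point or a dyadic
interval. Which points occur is irrelevant and not recorded. -/
def IsDyadicComp (G S : Set ℝ) : Prop :=
  (∃ r, S = {r}) ∨ ∃ n a b, IsDyadic G n a b ∧ S = Ioo a b

lemma IsTensorComp.isDyadicComp {G : Set ℝ} (h : IsTensorComp G S) : IsDyadicComp G S :=
  h.imp (fun ⟨r, _, hr⟩ => ⟨r, hr⟩) fun ⟨a, b, hab, hS⟩ => ⟨0, a, b, hab, hS⟩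

lemma IsTensorComp.subset_closure {G : Set ℝ} (hS : IsTensorComp G S) (hS' : IsTensorComp G S')
    (h : (S ∩ closure S').Nonempty) : S ⊆ closure S' := by
  obtain ⟨y, hy, hy'⟩ := h
  rcases hS with ⟨r, -, rfl⟩ | ⟨a, b, hab, rfl⟩
  · rwa [mem_singleton_iff.1 hy, ← singleton_subset_iff] at hy'
  rcases hS' with ⟨r, hr, rfl⟩ | ⟨c, d, hcd, rfl⟩
  · obtain rfl : y = r := by simpa using hy'
    rcases hab.le_or_le y hr with hle | hle
    · exact absurd hy.1 hle.not_gt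
    · exact absurd hy.2 hle.not_gt
  · rw [closure_Ioo hcd.lt.ne] at hy' ⊢
    have hca : c ≤ a :=
      (hab.le_or_le c hcd.left_mem).resolve_right (hy'.1.trans_lt hy.2).not_ge
    have hbd : b ≤ d :=
      (hab.le_or_le d hcd.right_mem).resolve_left (hy.1.trans_le hy'.2).not_ge
    exact Ioo_subset_Icc_self.trans (Icc_subset_Icc hca hbd)

lemma IsTensorComp.frontier_subset {G : Set ℝ} (h : IsTensorComp G S) : frontier S ⊆ G := by
  rcases h with ⟨r, hr, rfl⟩ | ⟨a, b, hab, rfl⟩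
  · simpa [isClosed_singleton.frontier_eq] using hr
  · rw [frontier_Ioo hab.lt]
    exact insert_subset hab.left_mem (singleton_subset_iff.2 hab.right_mem)

lemma IsTensorComp.exists_isGap_mem_Icc {G : Set ℝ} (h : IsTensorComp G S) (hG : G.Finite)
    (hG' : G.Nontrivial) {y : ℝ} (hy : y ∈ S) : ∃ a b, IsGap G a b ∧ y ∈ Icc a b := by
  rcases h with ⟨r, hr, rfl⟩ | ⟨a, b, hab, rfl⟩
  · exact mem_singleton_iff.1 hy ▸ TSpline.exists_isGap_mem_Icc hG hG' hr
  · exact ⟨a, b, hab, Ioo_subset_Icc_self hy⟩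

/-- The parts into which the point `m` divides the interval `(a, b)`. -/
def splitParts (a m b : ℝ) : Set (Set ℝ) := {Ioo a m, {m}, Ioo m b}

lemma subset_Ioo_of_mem_splitParts (ham : a < m) (hmb : m < b) (h : S ∈ splitParts a m b) :
    S ⊆ Ioo a b := by
  rcases h with rfl | rfl | rfl
  · exact Ioo_subset_Ioo_right hmb.le
  · exact singleton_subset_iff.2 ⟨ham, hmb⟩
  · exact Ioo_subset_Ioo_left ham.le

lemma exists_mem_splitParts_closure (ham : a < m) (hmb : m < b) {y : ℝ} (hy : y ∈ Icc a b) :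
    ∃ S ∈ splitParts a m b, (¬∃ r, S = {r}) ∧ y ∈ closure S := by
  rcases le_total y m with h | h
  · refine ⟨Ioo a m, by simp [splitParts], not_exists_Ioo_eq_singleton ham, ?_⟩
    rw [closure_Ioo ham.ne]
    exact ⟨hy.1, h⟩
  · refine ⟨Ioo m b, by simp [splitParts], not_exists_Ioo_eq_singleton hmb, ?_⟩
    rw [closure_Ioo hmb.ne]
    exact ⟨h, hy.2⟩

lemma frontier_subset_of_mem_splitParts (ham : a < m) (hmb : m < b) (h : S ∈ splitParts a m b) :
    frontier S ⊆ insert m (frontier (Ioo a b)) := by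
  rw [frontier_Ioo (ham.trans hmb)]
  rcases h with rfl | rfl | rfl
  · rw [frontier_Ioo ham]
    grind
  · simp [isClosed_singleton.frontier_eq]
  · rw [frontier_Ioo hmb]
    grind

/-- `S` does not straddle the point `m` of `(a, b)`. -/
def IsUnsplit (a m b : ℝ) (S : Set ℝ) : Prop :=
  (∃ r, S = {r}) ∨ S ⊆ Ioo a m ∨ S ⊆ Ioo m b

lemma isUnsplit_of_mem_splitParts (h : S ∈ splitParts a m b) : IsUnsplit a m b S := by
  rcases h with rfl | rfl | rfl
  · exact .inr (.inl subset_rfl)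
  · exact .inl ⟨m, rfl⟩
  · exact .inr (.inr subset_rfl)

lemma IsUnsplit.subset_closure (hS : IsUnsplit a m b S) (hS' : S' ∈ splitParts a m b)
    (h : (S ∩ closure S').Nonempty) : S ⊆ closure S' := by
  obtain ⟨y, hy, hy'⟩ := h
  have closure_left : closure (Ioo a m) ⊆ Iic m :=
    closure_minimal (fun _ h => h.2.le) isClosed_Iic
  have closure_right : closure (Ioo m b) ⊆ Ici m :=
    closure_minimal (fun _ h => h.1.le) isClosed_Ici
  rcases hS with ⟨r, rfl⟩ | hleft | hright
  · rwa [mem_singleton_iff.1 hy, ← singleton_subset_iff] at hy'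
  · rcases hS' with rfl | rfl | rfl
    · exact hleft.trans subset_closure
    · exact absurd (by simpa using hy') (hleft hy).2.ne
    · exact absurd (closure_right hy') (hleft hy).2.not_ge
  · rcases hS' with rfl | rfl | rfl
    · exact absurd (closure_left hy') (hright hy).1.not_ge
    · exact absurd (by simpa using hy') (hright hy).1.ne'
    · exact hright.trans subset_closure

lemma IsDyadicComp.exists_isDyadic {G : Set ℝ} (h : IsDyadicComp G (Ioo a b)) (hab : a < b) :
    ∃ n, IsDyadic G n a b := by
  obtain ⟨n, c, d, hcd, heq⟩ := h.resolve_left (not_exists_Ioo_eq_singleton hab)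
  obtain ⟨rfl, rfl⟩ := (Ioo_eq_Ioo_iff_of_lt hab hcd.lt).1 heq
  exact ⟨n, hcd⟩

lemma IsDyadicComp.of_mem_splitParts {G : Set ℝ} (h : IsDyadicComp G (Ioo a b)) (hab : a < b)
    (hS : S ∈ splitParts a ((a + b) / 2) b) : IsDyadicComp G S := by
  obtain ⟨n, hn⟩ := h.exists_isDyadic hab
  rcases hS with rfl | rfl | rfl
  · exact .inr ⟨n + 1, _, _, ⟨a, b, hn, .inl ⟨rfl, rfl⟩⟩, rfl⟩
  · exact .inl ⟨_, rfl⟩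
  · exact .inr ⟨n + 1, _, _, ⟨a, b, hn, .inr ⟨rfl, rfl⟩⟩, rfl⟩

lemma IsDyadicComp.isUnsplit {G : Set ℝ} (h : IsDyadicComp G (Ioo a b)) (hab : a < b)
    (hS : IsDyadicComp G S) (hsub : S ⊆ Icc a b) (hne : S ≠ Ioo a b) :
    IsUnsplit a ((a + b) / 2) b S := by
  obtain ⟨n, hn⟩ := h.exists_isDyadic hab
  rcases hS with hr | ⟨n', c, d, hcd, rfl⟩
  · exact .inl hr
  have hIcc : Icc c d ⊆ Icc a b := closure_Ioo hcd.lt.ne ▸ closure_minimal hsub isClosed_Icc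
  obtain ⟨hac, hdb⟩ := (Icc_subset_Icc_iff hcd.lt.le).1 hIcc
  have hne' : ¬(a = c ∧ b = d) := fun ⟨hc, hd⟩ => hne (by rw [hc, hd])
  exact .inr ((hn.le_mid_or_mid_le hcd hac hdb hne').imp (Ioo_subset_Ioo hac)
    fun hc => Ioo_subset_Ioo hc hdb)

end Component

/-! ### Bisections -/

section Bisection

variable {d : ℕ} {M : Set (Box d)} {Q E F : Box d} {j : Fin d} {a m b : ℝ} {S : Set ℝ}

/-- `Q` is a cell with `j`-th component `(a, b)`, and `m` is the midpoint at which that component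
is to be bisected. -/
structure IsBisection (Q : Box d) (j : Fin d) (a m b : ℝ) : Prop where
  not_exists_eq_singleton : ∀ k, ¬∃ r : ℝ, Q k = {r}
  comp_eq : Q j = Ioo a b
  lt : a < b
  mid_eq : m = (a + b) / 2

/-- The mesh obtained from `M` by bisecting the cell `Q` at the point `m` in direction `j`. -/
def bisectCell (M : Set (Box d)) (Q : Box d) (j : Fin d) (m : ℝ) : Set (Box d) :=
  midSplit M Q j m fun k => closure (Q k)

/-- The bisection of the cell `Q` in direction `j` splits the entity `E`. -/
def IsSplit (Q : Box d) (j : Fin d) (E : Box d) : Prop :=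
  (∀ k, E k ⊆ closure (Q k)) ∧ E j = Q j

lemma BisectStep.exists_isBisection {N : Fin d → ℕ} {M' : Set (Box d)} (h : BisectStep N M M') :
    ∃ Q ∈ M, ∃ j a m b, IsBisection Q j a m b ∧ M' = bisectCell M Q j m := by
  obtain ⟨Q, hQ, j, a, b, m, hcell, hQj, hm, rfl⟩ := h
  refine ⟨Q, hQ, j, a, m, b, ⟨fun k => ?_, hQj, ?_, ?_⟩, rfl⟩
  · obtain ⟨c, d, hcd, -, hQk⟩ := hcell k
    exact hQk ▸ not_exists_Ioo_eq_singleton (Nat.cast_lt.2 hcd)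
  · obtain ⟨c, d, hcd, -, hQj'⟩ := hcell j
    rw [← nonempty_Ioo, ← hQj, hQj', nonempty_Ioo]
    exact Nat.cast_lt.2 hcd
  · rw [eq_div_iff two_ne_zero, mul_comm]
    exact_mod_cast hm.symm

namespace IsBisection

lemma left_lt (h : IsBisection Q j a m b) : a < m := by
  linarith [h.lt, h.mid_eq]

lemma lt_right (h : IsBisection Q j a m b) : m < b := by
  linarith [h.lt, h.mid_eq]

lemma mem_bisectCell_iff (h : IsBisection Q j a m b) :
    E ∈ bisectCell M Q j m ↔ (E ∈ M ∧ ¬IsSplit Q j E) ∨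
      ∃ F ∈ M, IsSplit Q j F ∧ ∃ S ∈ splitParts a m b, E = Function.update F j S := by
  simp only [bisectCell, midSplit, IsSplit, splitParts, h.comp_eq, csInf_Ioo h.lt, csSup_Ioo h.lt,
    mem_union, mem_sdiff, mem_ofPred_eq, mem_iUnion, mem_insert_iff, mem_singleton_iff,
    exists_eq_or_imp, exists_eq_left, exists_prop, and_assoc]
  exact or_congr (by tauto) Iff.rfl

lemma update_mem (h : IsBisection Q j a m b) (hF : F ∈ M) (hsplit : IsSplit Q j F)
    (hS : S ∈ splitParts a m b) : Function.update F j S ∈ bisectCell M Q j m :=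
  h.mem_bisectCell_iff.2 (.inr ⟨F, hF, hsplit, S, hS, rfl⟩)

lemma update_le (h : IsBisection Q j a m b) (hsplit : IsSplit Q j F)
    (hS : S ∈ splitParts a m b) : Function.update F j S ≤ F := by
  refine update_le_iff.2 ⟨?_, fun _ _ => le_rfl⟩
  rw [hsplit.2, h.comp_eq]
  exact subset_Ioo_of_mem_splitParts h.left_lt h.lt_right hS

lemma exists_parent (h : IsBisection Q j a m b) (hE : E ∈ bisectCell M Q j m) :
    ∃ F ∈ M, E ≤ F := by
  rcases h.mem_bisectCell_iff.1 hE with ⟨hE, -⟩ | ⟨F, hF, hsplit, S, hS, rfl⟩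
  · exact ⟨E, hE, le_rfl⟩
  · exact ⟨F, hF, h.update_le hsplit hS⟩

end IsBisection

end Bisection

/-! ### Meeting the closure of an entity -/

section DyadicMesh

variable {d : ℕ} {G : Fin d → Set ℝ} {M : Set (Box d)} {Q E F : Box d} {j : Fin d} {a m b : ℝ}

/-- The entities of the tensor-product mesh with real breakpoints `G`. -/
def tensorEntities (G : Fin d → Set ℝ) : Set (Box d) := {E | ∀ k, IsTensorComp (G k) (E k)}

lemma IsTensorMesh.eq_tensorEntities {N : Fin d → ℕ} (h : IsTensorMesh N M) :
    ∃ G : Fin d → Set ℝ, (∀ k, (G k).Finite ∧ 0 ∈ G k ∧ (N k : ℝ) ∈ G k) ∧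
      M = tensorEntities G := by
  obtain ⟨G, hG, rfl⟩ := h
  refine ⟨fun k => Nat.cast '' (G k : Set ℕ), fun k => ⟨(G k).finite_toSet.image _,
    ⟨0, (hG k).1, Nat.cast_zero⟩, mem_image_of_mem _ (hG k).2.1⟩, ?_⟩
  ext E
  refine forall_congr' fun k => or_congr (by simp) ⟨?_, ?_⟩
  · rintro ⟨a, ha, b, hb, hab, hgap, hE⟩
    refine ⟨a, b, ⟨mem_image_of_mem _ ha, mem_image_of_mem _ hb, Nat.cast_lt.2 hab, ?_⟩, hE⟩
    exact forall_mem_image.2 fun c hc => by exact_mod_cast hgap c hc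
  · rintro ⟨_, _, ⟨⟨a, ha, rfl⟩, ⟨b, hb, rfl⟩, hab, hgap⟩, hE⟩
    exact ⟨a, ha, b, hb, Nat.cast_lt.1 hab,
      fun c hc => by exact_mod_cast hgap c (mem_image_of_mem _ hc), hE⟩

/-- The invariant of bisection behind the absence of knots inside an entity: components are
points or dyadic intervals, and an entity meeting the closure of another one is contained in it.
Whether two boxes meet is tested componentwise. -/
structure IsDyadicMesh (G : Fin d → Set ℝ) (M : Set (Box d)) : Prop where
  comp : ∀ E ∈ M, ∀ k, IsDyadicComp (G k) (E k)
  subset_closure : ∀ E ∈ M, ∀ F ∈ M, (∀ k, (E k ∩ closure (F k)).Nonempty) →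
    ∀ k, E k ⊆ closure (F k)

lemma isDyadicMesh_tensorEntities : IsDyadicMesh G (tensorEntities G) where
  comp _ hE k := (hE k).isDyadicComp
  subset_closure _ hE _ hF hmeet k := (hE k).subset_closure (hF k) (hmeet k)

namespace IsDyadicMesh

lemma isUnsplit (hM : IsDyadicMesh G M) (hQ : Q ∈ M) (h : IsBisection Q j a m b)
    (hE : E ∈ bisectCell M Q j m) (hsub : ∀ k, E k ⊆ closure (Q k)) : IsUnsplit a m b (E j) := by
  rcases h.mem_bisectCell_iff.1 hE with ⟨hE, hsplit⟩ | ⟨F, -, -, S, hS, rfl⟩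
  · have hsubj := hsub j
    rw [h.comp_eq, closure_Ioo h.lt.ne] at hsubj
    exact h.mid_eq ▸ IsDyadicComp.isUnsplit (h.comp_eq ▸ hM.comp Q hQ j) h.lt (hM.comp E hE j)
      hsubj fun hEj => hsplit ⟨hsub, hEj.trans h.comp_eq.symm⟩
  · rw [Function.update_self]
    exact isUnsplit_of_mem_splitParts hS

lemma bisectCell (hM : IsDyadicMesh G M) (hQ : Q ∈ M) (h : IsBisection Q j a m b) :
    IsDyadicMesh G (bisectCell M Q j m) where
  comp E hE k := by
    rcases h.mem_bisectCell_iff.1 hE with ⟨hE, -⟩ | ⟨F, hF, -, S, hS, rfl⟩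
    · exact hM.comp E hE k
    rcases eq_or_ne k j with rfl | hk
    · rw [Function.update_self]
      exact IsDyadicComp.of_mem_splitParts (h.comp_eq ▸ hM.comp Q hQ k) h.lt (h.mid_eq ▸ hS)
    · rw [Function.update_of_ne hk]
      exact hM.comp F hF k
  subset_closure E hE F hF hmeet := by
    have subset_closure_old : ∀ F ∈ M, (∀ k, (E k ∩ closure (F k)).Nonempty) →
        ∀ k, E k ⊆ closure (F k) := by
      obtain ⟨E', hE', hEE'⟩ := h.exists_parent hE
      exact fun F hF hmeet k => (hEE' k).trans (hM.subset_closure E' hE' F hF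
        (fun i => (hmeet i).mono (inter_subset_inter_left _ (hEE' i))) k)
    rcases h.mem_bisectCell_iff.1 hF with ⟨hF, -⟩ | ⟨F, hF', hsplit, S, hS, rfl⟩
    · exact subset_closure_old F hF hmeet
    have hEF := subset_closure_old F hF' fun i =>
      (hmeet i).mono (inter_subset_inter_right _ (closure_mono (h.update_le hsplit hS i)))
    have hEQ (i) : E i ⊆ closure (Q i) :=
      (hEF i).trans (closure_minimal (hsplit.1 i) isClosed_closure)
    intro k
    specialize hmeet k
    rcases eq_or_ne k j with rfl | hk
    · rw [Function.update_self] at hmeet ⊢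
      exact (hM.isUnsplit hQ h hE hEQ).subset_closure hS hmeet
    · rw [Function.update_of_ne hk]
      exact hEF k

end IsDyadicMesh

lemma TMesh.exists_isDyadicMesh {N : Fin d → ℕ} (T : TMesh d N) :
    ∃ G, IsDyadicMesh G T.entities := by
  obtain ⟨M₀, hM₀, hsteps⟩ := T.constructed
  obtain ⟨G, -, rfl⟩ := hM₀.eq_tensorEntities
  refine ⟨G, ?_⟩
  generalize T.entities = M at hsteps ⊢
  induction hsteps with
  | refl => exact isDyadicMesh_tensorEntities
  | tail _ hstep ih =>
    obtain ⟨Q, hQ, j, a, m, b, h, rfl⟩ := hstep.exists_isBisection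
    exact ih.bisectCell hQ h

lemma TMesh.subset_closure_of_meets {N : Fin d → ℕ} (T : TMesh d N) (hE : E ∈ T.entities)
    (hF : F ∈ T.entities) (hmeet : ∀ k, (E k ∩ closure (F k)).Nonempty) (k : Fin d) :
    E k ⊆ closure (F k) :=
  let ⟨_, hG⟩ := T.exists_isDyadicMesh
  hG.subset_closure E hE F hF hmeet k

end DyadicMesh

/-! ### The skeleton -/

section Skeleton

variable {d : ℕ} {G : Fin d → Set ℝ} {M : Set (Box d)} {Q E F : Box d} {j k : Fin d} {a m b : ℝ}
  {x : Fin d → ℝ}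

/-- The `k`-orthogonal skeleton of a set of boxes. The hyperfaces are the boxes whose only
singleton component is the `k`-th one, and closures are taken componentwise. -/
def skelOf (M : Set (Box d)) (k : Fin d) : Set (Fin d → ℝ) :=
  {x | ∃ F ∈ M, (∃ r, F k = {r}) ∧ (∀ i ≠ k, ¬∃ r, F i = {r}) ∧ ∀ i, x i ∈ closure (F i)}

/-- The invariant of bisection behind the fact that end points of entities are knots: a point in
the frontier of the `k`-th component of an entity `E` projects `E` into the skeleton. -/
def FrontierInSkel (M : Set (Box d)) (k : Fin d) : Prop :=
  ∀ E ∈ M, ∀ x : Fin d → ℝ, x k ∈ frontier (E k) → (∀ i ≠ k, x i ∈ E i) → x ∈ skelOf M k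

lemma frontierInSkel_tensorEntities (hfin : ∀ i, (G i).Finite)
    (hG : ∀ i ≠ k, (G i).Nontrivial) : FrontierInSkel (tensorEntities G) k := by
  intro E hE x hxk hx
  have exists_gap (i : Fin d) (hi : i ≠ k) : ∃ a b, IsGap (G i) a b ∧ x i ∈ Icc a b :=
    (hE i).exists_isGap_mem_Icc (hfin i) (hG i hi) (hx i hi)
  choose! a b hgap hxab using exists_gap
  refine ⟨Function.update (fun i => Ioo (a i) (b i)) k {x k}, fun i => ?_, ⟨x k, by simp⟩,
    fun i hi => ?_, fun i => ?_⟩ <;> rcases eq_or_ne i k with rfl | hik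
  · rw [Function.update_self]
    exact .inl ⟨x i, (hE i).frontier_subset hxk, rfl⟩
  · rw [Function.update_of_ne hik]
    exact .inr ⟨a i, b i, hgap i hik, rfl⟩
  · exact absurd rfl hi
  · rw [Function.update_of_ne hik]
    exact not_exists_Ioo_eq_singleton (hgap i hik).lt
  · simp
  · rw [Function.update_of_ne hik, closure_Ioo (hgap i hik).lt.ne]
    exact hxab i hik

namespace IsBisection

lemma skelOf_subset (h : IsBisection Q j a m b) (k : Fin d) :
    skelOf M k ⊆ skelOf (bisectCell M Q j m) k := by
  rintro x ⟨F, hF, hFk, hFi, hx⟩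
  by_cases hsplit : IsSplit Q j F
  swap
  · exact ⟨F, h.mem_bisectCell_iff.2 (.inl ⟨hF, hsplit⟩), hFk, hFi, hx⟩
  have hkj : k ≠ j := by
    rintro rfl
    exact h.not_exists_eq_singleton k (hsplit.2 ▸ hFk)
  have hxj : x j ∈ Icc a b := by
    rw [← closure_Ioo h.lt.ne, ← h.comp_eq, ← hsplit.2]
    exact hx j
  obtain ⟨S, hS, hSne, hxS⟩ := exists_mem_splitParts_closure h.left_lt h.lt_right hxj
  refine ⟨Function.update F j S, h.update_mem hF hsplit hS, ?_, fun i hi => ?_, fun i => ?_⟩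
  · rwa [Function.update_of_ne hkj]
  · rcases eq_or_ne i j with rfl | hij
    · rwa [Function.update_self]
    · rw [Function.update_of_ne hij]
      exact hFi i hi
  · rcases eq_or_ne i j with rfl | hij
    · rwa [Function.update_self]
    · rw [Function.update_of_ne hij]
      exact hx i

lemma mem_skelOf_of_eq_mid (h : IsBisection Q j a m b) (hQ : Q ∈ M) (hxj : x j = m)
    (hx : ∀ i ≠ j, x i ∈ closure (Q i)) : x ∈ skelOf (bisectCell M Q j m) j := by
  have hm : ({m} : Set ℝ) ∈ splitParts a m b := by simp [splitParts]
  refine ⟨Function.update Q j {m}, h.update_mem hQ ⟨fun i => subset_closure, rfl⟩ hm,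
    ⟨m, by simp⟩, fun i hi => ?_, fun i => ?_⟩
  · rw [Function.update_of_ne hi]
    exact h.not_exists_eq_singleton i
  · rcases eq_or_ne i j with rfl | hi
    · simp [hxj]
    · rw [Function.update_of_ne hi]
      exact hx i hi

end IsBisection

lemma FrontierInSkel.bisectCell (hM : FrontierInSkel M k) (hQ : Q ∈ M)
    (h : IsBisection Q j a m b) : FrontierInSkel (bisectCell M Q j m) k := by
  intro E hE x hxk hx
  rcases h.mem_bisectCell_iff.1 hE with ⟨hE, -⟩ | ⟨F, hF, hsplit, S, hS, rfl⟩
  · exact h.skelOf_subset k (hM E hE x hxk hx)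
  have hxF (i) (hi : i ≠ k) : x i ∈ F i := h.update_le hsplit hS i (hx i hi)
  rcases eq_or_ne k j with rfl | hk
  · rw [Function.update_self] at hxk
    rcases frontier_subset_of_mem_splitParts h.left_lt h.lt_right hS hxk with hxm | hxk
    · exact h.mem_skelOf_of_eq_mid hQ hxm fun i hi => hsplit.1 i (hxF i hi)
    · rw [← h.comp_eq, ← hsplit.2] at hxk
      exact h.skelOf_subset k (hM F hF x hxk hxF)
  · rw [Function.update_of_ne hk] at hxk
    exact h.skelOf_subset k (hM F hF x hxk hxF)

lemma TMesh.frontierInSkel {N : Fin d → ℕ} (T : TMesh d N) (hN : ∀ i ≠ k, 0 < N i) :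
    FrontierInSkel T.entities k := by
  obtain ⟨M₀, hM₀, hsteps⟩ := T.constructed
  obtain ⟨G, hG, rfl⟩ := hM₀.eq_tensorEntities
  generalize T.entities = M at hsteps ⊢
  induction hsteps with
  | refl =>
    exact frontierInSkel_tensorEntities (fun i => (hG i).1) fun i hi =>
      ⟨0, (hG i).2.1, N i, (hG i).2.2, (Nat.cast_pos.2 (hN i hi)).ne⟩
  | tail _ hstep ih =>
    obtain ⟨Q, hQ, j, a, m, b, h, rfl⟩ := hstep.exists_isBisection
    exact ih.bisectCell hQ h

lemma mem_toSet : x ∈ toSet E ↔ ∀ i, x i ∈ E i := by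
  simp [toSet]

lemma mem_closure_toSet : x ∈ closure (toSet E) ↔ ∀ i, x i ∈ closure (E i) := by
  simp [toSet, closure_pi_set]

lemma skel_eq_skelOf {N : Fin d → ℕ} (T : TMesh d N) (k : Fin d) :
    skel T k = skelOf T.entities k := by
  have hcodim : d - (d - 1) = 1 := Nat.sub_sub_self k.pos
  have ncard_eq_one_iff (F : Box d) (hFk : ∃ r, F k = {r}) :
      (singDirs F).ncard = 1 ↔ ∀ i ≠ k, ¬∃ r, F i = {r} := by
    rw [ncard_eq_one]
    constructor
    · rintro ⟨l, hl⟩ i hik hi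
      have hkl : k ∈ singDirs F := hFk
      have hil : i ∈ singDirs F := hi
      rw [hl, mem_singleton_iff] at hkl hil
      exact hik (hil.trans hkl.symm)
    · intro h
      exact ⟨k, Subset.antisymm (fun i hi => not_imp_comm.1 (h i) (not_not_intro hi))
        (singleton_subset_iff.2 hFk)⟩
  ext x
  simp only [skel, Hdim, hcodim, mem_iUnion, exists_prop, mem_closure_toSet, skelOf,
    mem_ofPred_eq]
  refine exists_congr fun F => ⟨?_, ?_⟩
  · rintro ⟨⟨⟨hF, hcard⟩, hFk⟩, hx⟩
    exact ⟨hF, hFk, (ncard_eq_one_iff F hFk).1 hcard, hx⟩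
  · rintro ⟨hF, hFk, hFi, hx⟩
    exact ⟨⟨⟨hF, (ncard_eq_one_iff F hFk).2 hFi⟩, hFk⟩, hx⟩

end Skeleton
/-! ### Global knot vectors -/

section GlobalKnots

variable {d : ℕ} {N p : Fin d → ℕ} {T : TMesh d N} {E F : Box d} {k : Fin d} {a b n : ℕ}

lemma gv_finite (T : TMesh d N) (k : Fin d) (E : Box d) : (gv T k E).Finite :=
  (finite_Iic (N k)).subset fun _ h => h.1

lemma gv_congr (T : TMesh d N) (h : ∀ i ≠ k, E i = F i) : gv T k E = gv T k F := by
  have proj_congr (n : ℕ) : proj E k n = proj F k n := by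
    funext i
    rcases eq_or_ne i k with rfl | hi
    · simp [proj]
    · simp [proj, hi, h i hi]
  simp only [gv, proj_congr]

lemma mem_toSet_proj {x : Fin d → ℝ} :
    x ∈ toSet (proj E k n) ↔ x k = n ∧ ∀ i ≠ k, x i ∈ E i := by
  rw [mem_toSet]
  constructor
  · intro hx
    refine ⟨by simpa [proj] using hx k, fun i hi => ?_⟩
    simpa [proj, hi] using hx i
  · rintro ⟨hxk, hx⟩ i
    rcases eq_or_ne i k with rfl | hi
    · simp [proj, hxk]
    · simpa [proj, hi] using hx i hi

lemma IsMeshEntity.comp_nonempty (hE : IsMeshEntity N E) (k : Fin d) : (E k).Nonempty := by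
  rcases hE k with ⟨n, -, h⟩ | ⟨a, b, hab, -, h⟩
  · exact h ▸ singleton_nonempty _
  · exact h ▸ nonempty_Ioo.2 (Nat.cast_lt.2 hab)

lemma IsMeshEntity.comp_subset (hE : IsMeshEntity N E) (k : Fin d) : E k ⊆ Icc 0 (N k : ℝ) := by
  rcases hE k with ⟨n, hn, h⟩ | ⟨a, b, -, hb, h⟩
  · exact h ▸ singleton_subset_iff.2 ⟨n.cast_nonneg, Nat.cast_le.2 hn⟩
  · exact h ▸ Ioo_subset_Icc_self.trans (Icc_subset_Icc a.cast_nonneg (Nat.cast_le.2 hb))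

lemma mem_gv_of_mem_frontier (hN : ∀ i ≠ k, 0 < N i) (hE : E ∈ T.entities)
    (hn : (n : ℝ) ∈ frontier (E k)) : n ∈ gv T k E := by
  have hnN : (n : ℝ) ∈ Icc 0 (N k : ℝ) :=
    closure_minimal ((T.mem_entity E hE).comp_subset k) isClosed_Icc (frontier_subset_closure hn)
  refine ⟨Nat.cast_le.1 hnN.2, fun x hx => ?_⟩
  obtain ⟨hxk, hx⟩ := mem_toSet_proj.1 hx
  rw [skel_eq_skelOf]
  exact T.frontierInSkel hN E hE x (hxk ▸ hn) hx

/-- A hyperface through an interior point of `E k` would have to contain `E` in its closure. -/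
lemma notMem_gv_of_mem_Ioo (hE : E ∈ T.entities) (hEk : E k = Ioo (a : ℝ) b)
    (hn : n ∈ Ioo a b) : n ∉ gv T k E := by
  rintro ⟨-, hskel⟩
  choose y hy using (T.mem_entity E hE).comp_nonempty
  have hnE : (n : ℝ) ∈ E k := hEk ▸ ⟨Nat.cast_lt.2 hn.1, Nat.cast_lt.2 hn.2⟩
  let x := Function.update y k (n : ℝ)
  have hxE (i : Fin d) : x i ∈ E i := by
    rcases eq_or_ne i k with rfl | hi
    · simpa [x] using hnE
    · simpa [x, hi] using hy i
  have hx : x ∈ skel T k := hskel (mem_toSet_proj.2 ⟨by simp [x], fun i _ => hxE i⟩)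
  rw [skel_eq_skelOf] at hx
  obtain ⟨F, hF, ⟨r, hr⟩, -, hxF⟩ := hx
  have hsub : E k ⊆ closure (F k) :=
    T.subset_closure_of_meets hE hF (fun i => ⟨x i, hxE i, hxF i⟩) k
  rw [hr, closure_singleton, hEk] at hsub
  exact Ioo_infinite (Nat.cast_lt.2 (hn.1.trans hn.2)) ((finite_singleton r).subset hsub)

lemma isLeast_knot (hN : ∀ i ≠ k, 0 < N i) (hE : E ∈ T.entities)
    (hEk : E k = Ioo (a : ℝ) b) (hab : a < b) : IsLeast {v ∈ gv T k E | a < v} b := by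
  refine ⟨⟨mem_gv_of_mem_frontier hN hE ?_, hab⟩, fun v hv => ?_⟩
  · rw [hEk, frontier_Ioo (Nat.cast_lt.2 hab)]
    exact .inr rfl
  · by_contra! hvb
    exact notMem_gv_of_mem_Ioo hE hEk ⟨hv.2, hvb⟩ hv.1

/-- The part of admissibility concerning the skeleton: it contains the slices in the frame
region. -/
def FrameSlicesInSkel (p : Fin d → ℕ) (T : TMesh d N) : Prop :=
  ∀ k : Fin d, ∀ n : ℕ, (n ≤ halfdeg p k ∨ (N k - halfdeg p k ≤ n ∧ n ≤ N k)) →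
    slice N k n ⊆ skel T k

/-- The slice `x_k = 0` is covered by hyperfaces, whose other components are nonempty open
intervals. -/
lemma FrameSlicesInSkel.pos (h : FrameSlicesInSkel p T) {i : Fin d} (hi : i ≠ k) : 0 < N i := by
  have hzero : (0 : Fin d → ℝ) ∈ slice N k 0 :=
    ⟨fun i _ => ⟨le_rfl, Nat.cast_nonneg _⟩, by simp⟩
  have hskel := h k 0 (.inl (Nat.zero_le _)) hzero
  rw [skel_eq_skelOf] at hskel
  obtain ⟨F, hF, -, hFi, -⟩ := hskel
  rcases T.mem_entity F hF i with ⟨n, -, hn⟩ | ⟨a, b, hab, hb, -⟩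
  · exact absurd ⟨_, hn⟩ (hFi i hi)
  · exact (Nat.zero_le a).trans_lt (hab.trans_le hb)

lemma FrameSlicesInSkel.mem_gv (h : FrameSlicesInSkel p T) (hE : E ∈ T.entities) (hn : n ≤ N k)
    (hframe : n ≤ halfdeg p k ∨ N k - halfdeg p k ≤ n) : n ∈ gv T k E := by
  refine ⟨hn, fun x hx => h k n (hframe.imp_right fun h => ⟨h, hn⟩) ?_⟩
  obtain ⟨hxk, hx⟩ := mem_toSet_proj.1 hx
  refine ⟨fun i _ => ?_, hxk⟩
  rcases eq_or_ne i k with rfl | hi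
  · exact hxk ▸ ⟨n.cast_nonneg, Nat.cast_le.2 hn⟩
  · exact (T.mem_entity E hE).comp_subset i (hx i hi)

end GlobalKnots

/-! ### Blocks of consecutive entries -/

section Rank

variable {α : Type*} [LinearOrder α] {V : Set α} {a : α}

/-- The number of entries of the knot vector `V` below `a`: the position of `a` in `V`, counted
from zero. -/
noncomputable def rank (V : Set α) (a : α) : ℕ := {v ∈ V | v < a}.ncard

lemma rank_mono (hV : V.Finite) : Monotone (rank V) := fun _ _ hab =>
  ncard_le_ncard (fun _ hv => ⟨hv.1, hv.2.trans_le hab⟩) (hV.subset (sep_subset V _))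

lemma strictMonoOn_rank (hV : V.Finite) : StrictMonoOn (rank V) V := fun _ ha _ _ hab =>
  ncard_lt_ncard ⟨fun _ hv => ⟨hv.1, hv.2.trans hab⟩, fun hsub => (hsub ⟨ha, hab⟩).2.false⟩
    (hV.subset (sep_subset V _))

lemma ncard_eq_rank_add (hV : V.Finite) (ha : a ∈ V) :
    V.ncard = rank V a + 1 + {v ∈ V | a < v}.ncard := by
  have hlt := hV.subset (sep_subset V (· < a))
  have hgt := hV.subset (sep_subset V (a < ·))
  have hunion : V = insert a {v ∈ V | v < a} ∪ {v ∈ V | a < v} := by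
    ext v
    grind
  have hdisj : Disjoint (insert a {v ∈ V | v < a}) {v ∈ V | a < v} :=
    disjoint_left.2 (by grind)
  conv_lhs => rw [hunion, ncard_union_eq hdisj (hlt.insert a) hgt,
    ncard_insert_of_notMem (fun h => h.2.false) hlt]
  rfl

lemma image_rank (hV : V.Finite) : rank V '' V = Iio V.ncard := by
  refine eq_of_subset_of_ncard_le ?_ ?_
  · rintro _ ⟨a, ha, rfl⟩
    have := ncard_eq_rank_add hV ha
    rw [mem_Iio]
    lia
  · rw [(strictMonoOn_rank hV).injOn.ncard_image, ncard_Iio_nat]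

lemma ncard_sep_rank_mem_Ico (hV : V.Finite) {i j : ℕ} (hj : j ≤ V.ncard) :
    {v ∈ V | rank V v ∈ Ico i j}.ncard = j - i := by
  have himage : rank V '' {v ∈ V | rank V v ∈ Ico i j} = Ico i j := by
    refine Subset.antisymm (by rintro _ ⟨v, hv, rfl⟩; exact hv.2) fun m hm => ?_
    obtain ⟨v, hv, rfl⟩ : m ∈ rank V '' V := image_rank hV ▸ hm.2.trans_le hj
    exact ⟨v, ⟨hv, hm⟩, rfl⟩
  rw [← ((strictMonoOn_rank hV).injOn.mono (sep_subset V _)).ncard_image, himage, ncard_Ico_nat]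

end Rank

section Block

variable {V W : Set ℕ} {a b h q : ℕ}

lemma exists_isBlockOf (hW : W.Finite) (ha : a ∈ W) (hh : h ≤ rank W a)
    (hq : q ≤ {v ∈ W | a < v}.ncard) :
    ∃ V, IsBlockOf V W ∧ V.ncard = h + 1 + q ∧ a ∈ V ∧ rank V a = h := by
  have hcard := ncard_eq_rank_add hW ha
  refine ⟨{v ∈ W | rank W v ∈ Ico (rank W a - h) (rank W a + 1 + q)},
    ⟨sep_subset W _, hW.subset (sep_subset W _), ?_⟩, ?_, ?_, ?_⟩
  · intro v hv b hb c hc hbv hvc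
    exact ⟨hv, hb.2.1.trans (rank_mono hW hbv), (rank_mono hW hvc).trans_lt hc.2.2⟩
  · rw [ncard_sep_rank_mem_Ico hW (by lia)]
    lia
  · exact ⟨ha, by lia, by lia⟩
  · have hbelow : {v ∈ {v ∈ W | rank W v ∈ Ico (rank W a - h) (rank W a + 1 + q)} | v < a} =
        {v ∈ W | rank W v ∈ Ico (rank W a - h) (rank W a)} := by
      ext v
      have hlt (hv : v ∈ W) := (strictMonoOn_rank hW).lt_iff_lt hv ha
      grind
    rw [rank, hbelow, ncard_sep_rank_mem_Ico hW (by lia)]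
    lia

lemma IsBlockOf.isLeast (hV : IsBlockOf V W) (ha : a ∈ V) (hne : {v ∈ V | a < v}.Nonempty)
    (hb : IsLeast {v ∈ W | a < v} b) : IsLeast {v ∈ V | a < v} b := by
  obtain ⟨c, hc, hac⟩ := hne
  have hbc : b ≤ c := hb.2 ⟨hV.1 hc, hac⟩
  exact ⟨⟨hV.2.2 b hb.1.1 a ha c hc hb.1.2.le hbc, hb.1.2⟩,
    fun v hv => hb.2 ⟨hV.1 hv.1, hv.2⟩⟩

end Block

/-! ### Local knot vectors of anchors -/

section LocalKnots

variable {d : ℕ} {N p : Fin d → ℕ} {T : TMesh d N} {A B : Box d} {k : Fin d} {V : Set ℕ} {a b : ℕ}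

lemma IsAnchor.comp_subset (hA : IsAnchor p T A) (k : Fin d) :
    A k ⊆ Icc (halfdeg p k : ℝ) ((N k : ℝ) - halfdeg p k) :=
  (univ_pi_subset_univ_pi_iff.1 hA.2.1).resolve_right
    (fun ⟨i, hi⟩ => ((T.mem_entity A hA.1).comp_nonempty i).ne_empty hi) k

lemma IsAnchor.exists_sInf (hA : IsAnchor p T A) (k : Fin d) :
    ∃ a : ℕ, (a : ℝ) = sInf (A k) ∧ (a : ℝ) ∈ frontier (A k) ∧ halfdeg p k ≤ a ∧
      a + (p k + 1 - halfdeg p k) ≤ N k := by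
  have hsub := closure_minimal (hA.comp_subset k) isClosed_Icc
  have hhalf : halfdeg p k = (p k + 1) / 2 := rfl
  rcases T.mem_entity A hA.1 k with ⟨n, -, hAk⟩ | ⟨a, b, hab, -, hAk⟩
  · obtain ⟨t, ht⟩ := (hA.2.2 k).1 ⟨n, hAk⟩
    rw [hAk, closure_singleton, singleton_subset_iff, mem_Icc, le_sub_iff_add_le] at hsub
    norm_cast at hsub
    refine ⟨n, by simp [hAk], by simp [hAk, isClosed_singleton.frontier_eq], hsub.1, by lia⟩
  · have hab' : (a : ℝ) < b := Nat.cast_lt.2 hab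
    obtain ⟨t, ht⟩ : Even (p k) := Nat.not_odd_iff_even.1 fun hodd =>
      not_exists_Ioo_eq_singleton hab' (hAk ▸ (hA.2.2 k).2 hodd)
    rw [hAk, closure_Ioo hab'.ne, Icc_subset_Icc_iff hab'.le, le_sub_iff_add_le] at hsub
    norm_cast at hsub
    exact ⟨a, by rw [hAk, csInf_Ioo hab'], by simp [hAk, frontier_Ioo hab'], hsub.1, by lia⟩

lemma IsAnchor.exists_isAnchorKV (hA : IsAnchor p T A) (hT : FrameSlicesInSkel p T) (k : Fin d) :
    ∃ V, IsAnchorKV T p A k V := by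
  obtain ⟨a, hinf, hfr, hlow, hup⟩ := hA.exists_sInf k
  have hfin := gv_finite T k A
  have hle : halfdeg p k ≤ p k + 1 := Nat.div_le_self _ _
  have hhalf : p k + 1 - halfdeg p k ≤ halfdeg p k + 1 := by
    rw [halfdeg]
    lia
  have knots_below : halfdeg p k ≤ rank (gv T k A) a := by
    have hsub : Iio (halfdeg p k) ⊆ {v ∈ gv T k A | v < a} := fun v hv =>
      ⟨hT.mem_gv hA.1 (by grind) (.inl (mem_Iio.1 hv).le), by grind⟩
    exact (ncard_Iio_nat _).symm.trans_le (ncard_le_ncard hsub (hfin.subset (sep_subset _ _)))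
  have knots_above : p k + 1 - halfdeg p k ≤ {v ∈ gv T k A | a < v}.ncard := by
    have hsub : Ioc (N k - (p k + 1 - halfdeg p k)) (N k) ⊆ {v ∈ gv T k A | a < v} :=
      fun v hv => ⟨hT.mem_gv hA.1 hv.2 (.inr (by grind)), by grind⟩
    have hcard := ncard_le_ncard hsub (hfin.subset (sep_subset _ _))
    rw [ncard_Ioc_nat] at hcard
    lia
  obtain ⟨V, hV, hcard, haV, hrank⟩ := exists_isBlockOf hfin
    (mem_gv_of_mem_frontier (fun _ => hT.pos) hA.1 hfr) knots_below knots_above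
  exact ⟨V, hV, by lia, a, hinf, haV, hrank⟩

lemma IsAnchor.isAnchorKV_anchorKV (hA : IsAnchor p T A) (hT : FrameSlicesInSkel p T)
    (k : Fin d) : IsAnchorKV T p A k (anchorKV T p A k) := by
  have hV := hA.exists_isAnchorKV hT k
  rw [anchorKV, dif_pos hV]
  exact hV.choose_spec

lemma IsAnchorKV.nonempty (hV : IsAnchorKV T p A k V) : V.Nonempty :=
  let ⟨_, _, a, _, ha, _⟩ := hV
  ⟨a, ha⟩

lemma IsAnchorKV.isLeast (hV : IsAnchorKV T p A k V) (hN : ∀ i ≠ k, 0 < N i)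
    (hA : A ∈ T.entities) (hAk : A k = Ioo (a : ℝ) b) (hab : a < b) :
    IsLeast {v ∈ V | a < v} b := by
  obtain ⟨hblock, hcard, a', ha', haV, hrank⟩ := hV
  have hab' : (a : ℝ) < b := Nat.cast_lt.2 hab
  rw [hAk, csInf_Ioo hab', Nat.cast_inj] at ha'
  subst ha'
  refine hblock.isLeast haV (nonempty_of_ncard_ne_zero ?_) (isLeast_knot hN hA hAk hab)
  have hsplit := ncard_eq_rank_add hblock.2.1 haV
  rw [hcard, rank, hrank, halfdeg] at hsplit
  lia

lemma IsAnchorKV.sInf_eq (hVA : IsAnchorKV T p A k V) (hVB : IsAnchorKV T p B k V) :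
    sInf (A k) = sInf (B k) := by
  obtain ⟨hV, -, a, ha, haV, hrank⟩ := hVA
  obtain ⟨-, -, b, hb, hbV, hrank'⟩ := hVB
  rw [← ha, ← hb, (strictMonoOn_rank hV.2.1).injOn haV hbV (hrank.trans hrank'.symm)]

lemma IsAnchorKV.comp_eq (hVA : IsAnchorKV T p A k V) (hVB : IsAnchorKV T p B k V)
    (hN : ∀ i ≠ k, 0 < N i) (hA : IsAnchor p T A) (hB : IsAnchor p T B) : A k = B k := by
  have hinf := hVA.sInf_eq hVB
  have hsing : (∃ r, A k = {r}) ↔ ∃ r, B k = {r} := (hA.2.2 k).trans (hB.2.2 k).symm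
  rcases T.mem_entity A hA.1 k with ⟨n, -, hAk⟩ | ⟨a, b, hab, -, hAk⟩
  · obtain ⟨r, hBk⟩ := hsing.1 ⟨n, hAk⟩
    rw [hAk, hBk, csInf_singleton, csInf_singleton] at hinf
    rw [hAk, hBk, hinf]
  rcases T.mem_entity B hB.1 k with ⟨n, -, hBk⟩ | ⟨a', b', hab', -, hBk⟩
  · obtain ⟨r, hr⟩ := hsing.2 ⟨n, hBk⟩
    exact absurd ⟨r, hAk ▸ hr⟩ (not_exists_Ioo_eq_singleton (Nat.cast_lt.2 hab))
  rw [hAk, hBk, csInf_Ioo (Nat.cast_lt.2 hab), csInf_Ioo (Nat.cast_lt.2 hab'), Nat.cast_inj] at hinf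
  subst hinf
  rw [hAk, hBk, (hVA.isLeast hN hA.1 hAk hab).unique (hVB.isLeast hN hB.1 hBk hab')]

end LocalKnots

/-! ### Overlapping knot vectors -/

section Overlap

lemma Icc_subset_convOf {V : Set ℕ} {a b : ℕ} (ha : a ∈ V) (hb : b ∈ V) :
    Icc (a : ℝ) b ⊆ convOf V :=
  (convex_convexHull ℝ _).ordConnected.out (subset_convexHull ℝ _ (mem_image_of_mem _ ha))
    (subset_convexHull ℝ _ (mem_image_of_mem _ hb))

lemma isBlockOf_union_left {V W : Set ℕ} (hV : V.Finite) (h : Disjoint (convOf V) (convOf W)) :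
    IsBlockOf V (V ∪ W) := by
  refine ⟨subset_union_left, hV, ?_⟩
  rintro g (hg | hg) a ha b hb hag hgb
  · exact hg
  · exact (disjoint_left.1 h (Icc_subset_convOf ha hb ⟨Nat.cast_le.2 hag, Nat.cast_le.2 hgb⟩)
      (Icc_subset_convOf hg hg ⟨le_rfl, le_rfl⟩)).elim

lemma overlaps_of_disjoint_convOf {V W : Set ℕ} (hV : V.Finite) (hW : W.Finite)
    (h : Disjoint (convOf V) (convOf W)) : Overlaps V W :=
  ⟨V ∪ W, hV.union hW, isBlockOf_union_left hV h, union_comm W V ▸ isBlockOf_union_left hW h.symm⟩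

lemma exists_forall_ne_mem {α : Type*} [Finite α] [Nonempty α] {S : Set α}
    (h : Nat.card α - 1 ≤ S.ncard) : ∃ j, ∀ k ≠ j, k ∈ S := by
  have hadd := ncard_add_ncard_compl S
  obtain ⟨j, hj⟩ := (ncard_le_one_iff_subset_singleton (s := Sᶜ)).1 (by lia)
  exact ⟨j, fun k hk => not_not.1 fun hkS => hk (hj hkS)⟩

variable {d : ℕ} {N p : Fin d → ℕ} {T : TMesh d N} {A B : Box d}

lemma weakPartOverlap_of_disjoint_suppA (hA : ∀ k, IsAnchorKV T p A k (anchorKV T p A k))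
    (hB : ∀ k, IsAnchorKV T p B k (anchorKV T p B k)) (h : suppA T p A ∩ suppA T p B = ∅) :
    WeakPartOverlap T p A B := by
  rw [suppA, suppA, ← pi_inter_distrib, univ_pi_eq_empty_iff] at h
  obtain ⟨k, hk⟩ := h
  refine ⟨k, fun heq => ?_, overlaps_of_disjoint_convOf (hA k).1.2.1 (hB k).1.2.1
    (disjoint_iff_inter_eq_empty.2 hk)⟩
  obtain ⟨a, ha⟩ := (hA k).nonempty
  rw [← heq, inter_self] at hk
  exact notMem_empty _ (hk ▸ Icc_subset_convOf ha ha ⟨le_rfl, le_rfl⟩)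

/-- If the knot vectors agreed wherever they overlap, then `A` and `B` would agree off `j`, hence
have the same global, and so the same local, knot vector in direction `j`. -/
lemma weakPartOverlap_of_forall_ne_overlaps (hT : FrameSlicesInSkel p T) (hA : IsAnchor p T A)
    (hB : IsAnchor p T B) (hne : A ≠ B) {j : Fin d}
    (hj : ∀ k ≠ j, Overlaps (anchorKV T p A k) (anchorKV T p B k)) : WeakPartOverlap T p A B := by
  by_contra hweak
  have comp_eq (k : Fin d) (hk : Overlaps (anchorKV T p A k) (anchorKV T p B k)) : A k = B k := by
    have hVA := hA.isAnchorKV_anchorKV hT k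
    rw [not_not.1 fun h => hweak ⟨k, h, hk⟩] at hVA
    exact hVA.comp_eq (hB.isAnchorKV_anchorKV hT k) (fun _ => hT.pos) hA hB
  have hgv : gv T j A = gv T j B := gv_congr T fun k hk => comp_eq k (hj k hk)
  have hjj : Overlaps (anchorKV T p A j) (anchorKV T p B j) :=
    ⟨gv T j A, gv_finite T j A, (hA.isAnchorKV_anchorKV hT j).1,
      hgv ▸ (hB.isAnchorKV_anchorKV hT j).1⟩
  refine hne (funext fun k => comp_eq k ?_)
  rcases eq_or_ne k j with rfl | hk
  · exact hjj
  · exact hj k hk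

theorem sdc_implies_wdc_general (T : TMesh d N) (hT : FrameSlicesInSkel p T) (hsdc : SDC T p) :
    WDC T p := by
  intro A B hA hB hne
  rcases hsdc A B hA hB hne with hdisj | hcard
  · exact weakPartOverlap_of_disjoint_suppA (hA.isAnchorKV_anchorKV hT)
      (hB.isAnchorKV_anchorKV hT) hdisj
  · have : Nonempty (Fin d) := (Function.ne_iff.1 hne).nonempty
    obtain ⟨j, hj⟩ := exists_forall_ne_mem (by rwa [Nat.card_fin])
    exact weakPartOverlap_of_forall_ne_overlaps hT hA hB hne hj

end Overlap

end TSpline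

/-- For an admissible T-mesh, strong dual-compatibility implies weak
dual-compatibility. -/
theorem TSpline.sdc_implies_wdc
    {d : ℕ} {N p : Fin d → ℕ} (T : TSpline.TMesh d N)
    (hadm : TSpline.Admissible p T) (hsdc : TSpline.SDC T p) :
    TSpline.WDC T p :=
  TSpline.sdc_implies_wdc_general T hadm.2 hsdc
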